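/- arXiv:2112.08456 — 2 statements merged into one kernel-verified Lean document; each statement's English description precedes it below -/
import Mathlib

section
/- Let k ≥ 5 be an integer and let G be a geometric graph on a set of n points in convex position such that every edge of G crosses at most k other edges of G. Then the number of edges of G is at most √(243·k/40)·n. -/
/-- Points of the plane. -/
abbrev Pt : Type := ℝ × ℝ

/-- A finite point set is in general position if no three of its points are collinear. -/
def GenPos (P : Finset Pt) : Prop :=
  ∀ p ∈ P, ∀ q ∈ P, ∀ r ∈ P, p ≠ q → p ≠ r → q ≠ r →
    ¬ Collinear ℝ ({p, q, r} : Set Pt)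

/-- A finite point set is in convex position: general position and no point lies in the
convex hull of the others. -/
def ConvexPos (P : Finset Pt) : Prop :=
  GenPos P ∧ ∀ p ∈ P, p ∉ convexHull ℝ ((P.erase p : Finset Pt) : Set Pt)

/-- The edge set of the complete geometric graph on `P`: all unordered pairs of
distinct points of `P`. -/
def KEdges (P : Finset Pt) : Set (Sym2 Pt) :=
  {e | ∃ p ∈ P, ∃ q ∈ P, p ≠ q ∧ e = s(p, q)}

/-- Two edges cross: they share no endpoint and their open segments intersect. -/
def Cross (e f : Sym2 Pt) : Prop :=
  (∀ x, x ∈ e → x ∉ f) ∧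
    ∃ p q r s : Pt, e = s(p, q) ∧ f = s(r, s) ∧
      (openSegment ℝ p q ∩ openSegment ℝ r s).Nonempty

/-- A set of edges is `k`-plane if each of its edges crosses at most `k` other edges
of the set. -/
def KPlane (k : ℕ) (E : Set (Sym2 Pt)) : Prop :=
  ∀ e ∈ E, {f | f ∈ E ∧ Cross e f}.ncard ≤ k

/-- A set of edges is `k`-quasi-plane if it contains no `k` pairwise crossing edges. -/
def KQuasiPlane (k : ℕ) (E : Set (Sym2 Pt)) : Prop :=
  ¬ ∃ S : Finset (Sym2 Pt), ↑S ⊆ E ∧ S.card = k ∧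
      (S : Set (Sym2 Pt)).Pairwise Cross

/-- The set of crossing pairs (unordered) of a set of edges. -/
def CrossPairs (E : Set (Sym2 Pt)) : Set (Sym2 (Sym2 Pt)) :=
  {c | ∃ e ∈ E, ∃ f ∈ E, Cross e f ∧ c = s(e, f)}

/-- A crossing family in `K(P)`: a finite set of pairwise crossing edges of `K(P)`. -/
def CrossingFamily (P : Finset Pt) (S : Finset (Sym2 Pt)) : Prop :=
  ↑S ⊆ KEdges P ∧ (S : Set (Sym2 Pt)).Pairwise Cross

/-- `E` forms a spanning tree on the point set `P`: all edges are edges of `K(P)` and the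
corresponding graph on the points of `P` is connected and acyclic. -/
def IsSpanningTreeOn (P : Finset Pt) (E : Set (Sym2 Pt)) : Prop :=
  E ⊆ KEdges P ∧
    (SimpleGraph.fromRel (fun a b : {x // x ∈ P} => s((a : Pt), (b : Pt)) ∈ E)).IsTree

/-!
The points are numbered counterclockwise, so that the chord `ab` is crossed exactly by the chords
with one end in the open interval `(a, b)` and the other outside `[a, b]`.

Suppose that every vertex has degree more than `D`. Among the chords `ab` with at least
`q = ⌊D / 2⌋` vertices in `(a, b)`, take one with the fewest. A chord lying strictly under `ab`
then has fewer than `q` vertices under it, so the vertex of rank `i` in `(a, b)` sends at most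
`min (i + 1) q` chords to the left within `[a, b]`, and similarly to the right. All its other
chords cross `ab`; summing over `(a, b)`, at least `q * (D - q) = ⌊D² / 4⌋` chords cross `ab`.

Hence, if `k < ⌊D² / 4⌋`, a convex `k`-plane graph has a vertex of degree at most `D`, and
deleting such vertices one at a time gives at most `D * n` edges. The choice
`D = ⌊√(4 * k + 1)⌋ + 1` is admissible, and it is at most `√(243 * k / 40)` once `5 ≤ k`.
-/

open Finset

/-! ### Chords of a linearly ordered vertex set -/

section Rank

variable {α M : Type*} [LinearOrder α] [AddCommMonoid M]

lemma sum_card_filter_lt (s : Finset α) (g : ℕ → M) :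
    ∑ c ∈ s, g #{d ∈ s | d < c} = ∑ i ∈ range #s, g i := by
  induction s using Finset.induction_on_max with
  | empty => simp
  | insert m s hm ih =>
    have hms : m ∉ s := fun h => (hm m h).false
    have rank_max : #{d ∈ insert m s | d < m} = #s := by
      rw [filter_insert, if_neg (lt_irrefl m), filter_true_of_mem hm]
    have rank_of_mem : ∀ c ∈ s, #{d ∈ insert m s | d < c} = #{d ∈ s | d < c} := fun c hc => by
      rw [filter_insert, if_neg (hm c hc).not_gt]
    rw [sum_insert hms, card_insert_of_notMem hms, sum_range_succ, ← ih, rank_max, add_comm,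
      sum_congr rfl fun c hc => congrArg g (rank_of_mem c hc)]

lemma sum_card_filter_gt (s : Finset α) (g : ℕ → M) :
    ∑ c ∈ s, g #{d ∈ s | c < d} = ∑ i ∈ range #s, g i :=
  sum_card_filter_lt (α := αᵒᵈ) s g

end Rank

lemma two_mul_sum_range_min_succ {q L : ℕ} (hqL : q ≤ L) :
    2 * ∑ i ∈ range L, min (i + 1) q + q * q = 2 * (L * q) + q := by
  induction L, hqL using Nat.le_induction with
  | base =>
    have hmin : ∀ i ∈ range q, min (i + 1) q = i + 1 := fun i hi =>
      min_eq_left (mem_range.mp hi)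
    have gauss := sum_range_id_mul_two (q + 1)
    rw [sum_range_succ', add_zero, Nat.add_sub_cancel] at gauss
    rw [sum_congr rfl hmin]
    linarith
  | succ L hqL ih =>
    rw [sum_range_succ, min_eq_right (by omega)]
    linarith

lemma sq_div_four_eq_mul (D : ℕ) : D ^ 2 / 4 = D / 2 * (D - D / 2) := by
  rcases Nat.even_or_odd' D with ⟨m, rfl | rfl⟩
  · rw [show 2 * m / 2 = m by omega, show 2 * m - m = m by omega]
    ring_nf
    omega
  · rw [show (2 * m + 1) / 2 = m by omega, show 2 * m + 1 - m = m + 1 by omega]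
    ring_nf
    omega

section LinearOrder

variable {V : Type*} [LinearOrder V] [LocallyFiniteOrder V]

lemma card_le_of_forall_card_Ioo_lt_left {s : Finset V} {c : V} {q : ℕ}
    (hs : ∀ d ∈ s, d < c ∧ #(Ioo d c) < q) : #s ≤ q := by
  rcases s.eq_empty_or_nonempty with rfl | hne
  · simp
  obtain ⟨hlt, hcard⟩ := hs _ (s.min'_mem hne)
  calc #s ≤ #(Ico (s.min' hne) c) :=
        card_le_card fun d hd => mem_Ico.mpr ⟨s.min'_le d hd, (hs d hd).1⟩
    _ = #(Ioo (s.min' hne) c) + 1 := by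
        rw [← Ioo_insert_left hlt, card_insert_of_notMem left_notMem_Ioo]
    _ ≤ q := hcard

lemma card_le_of_forall_card_Ioo_lt_right {s : Finset V} {c : V} {q : ℕ}
    (hs : ∀ d ∈ s, c < d ∧ #(Ioo c d) < q) : #s ≤ q := by
  rcases s.eq_empty_or_nonempty with rfl | hne
  · simp
  obtain ⟨hlt, hcard⟩ := hs _ (s.max'_mem hne)
  calc #s ≤ #(Ioc c (s.max' hne)) :=
        card_le_card fun d hd => mem_Ioc.mpr ⟨(hs d hd).1, s.le_max' d hd⟩
    _ = #(Ioo c (s.max' hne)) + 1 := by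
        rw [← Ioo_insert_right hlt, card_insert_of_notMem right_notMem_Ioo]
    _ ≤ q := hcard

end LinearOrder

lemma card_interedges_eq_sum {V : Type*} (G : SimpleGraph V) [DecidableRel G.Adj]
    (s t : Finset V) : #(G.interedges s t) = ∑ c ∈ s, #{d ∈ t | G.Adj c d} := by
  simp only [SimpleGraph.interedges_def, card_filter, sum_product]

section Graph

variable {V : Type*} [LinearOrder V] [LocallyFiniteOrder V] [Fintype V]
  {G : SimpleGraph V} [DecidableRel G.Adj] {D q : ℕ} {a b : V}

lemma degree_le_add_min_add_min {c : V} (hc : c ∈ Ioo a b)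
    (hshort : ∀ u v, G.Adj u v → #(Ioo u v) < #(Ioo a b) → #(Ioo u v) < q) :
    G.degree c ≤ #{d ∈ (Icc a b)ᶜ | G.Adj c d} + min (#{d ∈ Ioo a b | d < c} + 1) q +
      min (#{d ∈ Ioo a b | c < d} + 1) q := by
  obtain ⟨hac, hcb⟩ := mem_Ioo.mp hc
  set left : Finset V := {d ∈ Ico a c | G.Adj c d}
  set right : Finset V := {d ∈ Ioc c b | G.Adj c d}
  have cover : G.neighborFinset c ⊆ ({d ∈ (Icc a b)ᶜ | G.Adj c d} ∪ left) ∪ right := by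
    intro d hd
    have hcd : G.Adj c d := (G.mem_neighborFinset c d).mp hd
    have := hcd.ne
    have := mem_compl (s := Icc a b) (a := d)
    grind
  have left_rank : #left ≤ #{d ∈ Ioo a b | d < c} + 1 := by
    refine (card_le_card fun d hd => ?_).trans (card_insert_le a _)
    grind
  have right_rank : #right ≤ #{d ∈ Ioo a b | c < d} + 1 := by
    refine (card_le_card fun d hd => ?_).trans (card_insert_le b _)
    grind
  have left_short : #left ≤ q := card_le_of_forall_card_Ioo_lt_left fun d hd => by
    obtain ⟨hd, hcd⟩ := mem_filter.mp hd
    obtain ⟨had, hdc⟩ := mem_Ico.mp hd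
    refine ⟨hdc, hshort d c hcd.symm <| card_lt_card ?_⟩
    exact (ssubset_iff_of_subset (Ioo_subset_Ioo had hcb.le)).mpr ⟨c, hc, right_notMem_Ioo⟩
  have right_short : #right ≤ q := card_le_of_forall_card_Ioo_lt_right fun d hd => by
    obtain ⟨hd, hcd⟩ := mem_filter.mp hd
    obtain ⟨hcd', hdb⟩ := mem_Ioc.mp hd
    refine ⟨hcd', hshort c d hcd <| card_lt_card ?_⟩
    exact (ssubset_iff_of_subset (Ioo_subset_Ioo hac.le hdb)).mpr ⟨c, hc, left_notMem_Ioo⟩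
  calc G.degree c ≤ #{d ∈ (Icc a b)ᶜ | G.Adj c d} + #left + #right :=
        (card_le_card cover).trans <|
          (card_union_le _ _).trans <| Nat.add_le_add_right (card_union_le _ _) _
    _ ≤ _ := by gcongr <;> exact le_min ‹_› ‹_›

lemma mul_sub_le_card_interedges (hdeg : ∀ v, D < G.degree v) (hq : 2 * q ≤ D)
    (hlong : q ≤ #(Ioo a b))
    (hshort : ∀ u v, G.Adj u v → #(Ioo u v) < #(Ioo a b) → #(Ioo u v) < q) :
    q * (D - q) ≤ #(G.interedges (Ioo a b) (Icc a b)ᶜ) := by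
  set L := #(Ioo a b)
  have total : L * (D + 1) ≤
      #(G.interedges (Ioo a b) (Icc a b)ᶜ) + 2 * ∑ i ∈ range L, min (i + 1) q := by
    calc L * (D + 1) = ∑ _c ∈ Ioo a b, (D + 1) := by rw [sum_const, smul_eq_mul]
      _ ≤ ∑ c ∈ Ioo a b, (#{d ∈ (Icc a b)ᶜ | G.Adj c d} +
            min (#{d ∈ Ioo a b | d < c} + 1) q + min (#{d ∈ Ioo a b | c < d} + 1) q) :=
          sum_le_sum fun c hc => (hdeg c).trans_le <| degree_le_add_min_add_min hc hshort
      _ = _ := by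
          rw [sum_add_distrib, sum_add_distrib, ← card_interedges_eq_sum,
            sum_card_filter_lt _ fun i => min (i + 1) q,
            sum_card_filter_gt _ fun i => min (i + 1) q, two_mul, add_assoc]
  have sum_min := two_mul_sum_range_min_succ hlong
  obtain ⟨r, rfl⟩ := Nat.exists_eq_add_of_le hq
  rw [show 2 * q + r - q = q + r by omega]
  nlinarith [Nat.mul_le_mul_right (r + 1) hlong]

lemma exists_adj_le_card_Ioo [Nonempty V] (hdeg : ∀ v, q < G.degree v) :
    ∃ u v, G.Adj u v ∧ q ≤ #(Ioo u v) := by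
  obtain ⟨u, hu⟩ := Finite.exists_min (id : V → V)
  by_contra! hshort
  refine (hdeg u).not_ge <| card_le_of_forall_card_Ioo_lt_right (c := u) fun v hv => ?_
  have huv : G.Adj u v := (G.mem_neighborFinset u v).mp hv
  exact ⟨(hu v).lt_of_ne huv.ne, hshort u v huv⟩

theorem exists_adj_sq_div_four_le_card_interedges [Nonempty V] (hdeg : ∀ v, D < G.degree v) :
    ∃ a b, G.Adj a b ∧ D ^ 2 / 4 ≤ #(G.interedges (Ioo a b) (Icc a b)ᶜ) := by
  obtain ⟨u, v, huv, hlong⟩ := exists_adj_le_card_Ioo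
    fun v => (Nat.div_le_self D 2).trans_lt (hdeg v)
  obtain ⟨⟨a, b⟩, ⟨hab, hlong⟩, hmin⟩ := exists_minimalFor_of_wellFoundedLT
    (fun e : V × V => G.Adj e.1 e.2 ∧ D / 2 ≤ #(Ioo e.1 e.2)) (fun e => #(Ioo e.1 e.2))
    ⟨(u, v), huv, hlong⟩
  have hshort : ∀ u v, G.Adj u v → #(Ioo u v) < #(Ioo a b) → #(Ioo u v) < D / 2 := by
    intro u v huv hlt
    by_contra! hle
    exact hlt.not_ge (hmin (j := (u, v)) ⟨huv, hle⟩ hlt.le)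
  refine ⟨a, b, hab, ?_⟩
  rw [sq_div_four_eq_mul]
  exact mul_sub_le_card_interedges hdeg (Nat.mul_div_le D 2) hlong hshort

end Graph

lemma ncard_inter_sym2_le_mul_card {α : Type*} {E : Set (Sym2 α)} {d : ℕ} {P : Finset α}
    (hdeg : ∀ Q ⊆ P, Q.Nonempty → ∃ v ∈ Q, {e | e ∈ E ∩ Q.sym2 ∧ v ∈ e}.ncard ≤ d) :
    (E ∩ P.sym2).ncard ≤ d * #P := by
  classical
  induction P using Finset.strongInduction with
  | H P ih =>
    rcases P.eq_empty_or_nonempty with rfl | hne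
    · simp
    obtain ⟨v, hv, hvd⟩ := hdeg P Subset.rfl hne
    have hlt := erase_ssubset hv
    have cover : E ∩ P.sym2 ⊆ {e | e ∈ E ∩ P.sym2 ∧ v ∈ e} ∪ E ∩ (P.erase v).sym2 := by
      rintro e ⟨heE, heP⟩
      by_cases hve : v ∈ e
      · exact .inl ⟨⟨heE, heP⟩, hve⟩
      · refine .inr ⟨heE, mem_sym2_iff.mpr fun w hw => mem_erase.mpr ⟨?_, ?_⟩⟩
        · exact fun hwv => hve (hwv ▸ hw)
        · exact mem_sym2_iff.mp heP w hw
    calc (E ∩ P.sym2).ncard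
        ≤ {e | e ∈ E ∩ P.sym2 ∧ v ∈ e}.ncard + (E ∩ (P.erase v).sym2).ncard :=
          (Set.ncard_le_ncard cover <| .union
            (P.sym2.finite_toSet.subset fun _ he => he.1.2)
            ((P.erase v).sym2.finite_toSet.inter_of_right E)).trans (Set.ncard_union_le _ _)
      _ ≤ d + d * #(P.erase v) :=
          add_le_add hvd <| ih _ hlt fun Q hQ => hdeg Q (hQ.trans hlt.subset)
      _ = d * #P := by rw [← card_erase_add_one hv]; ring

/-! ### Counterclockwise enumeration of points in convex position -/

/-- Twice the signed area of the triangle `pqr`, positive iff `p`, `q`, `r` are in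
counterclockwise order. -/
def orient (p q r : Pt) : ℝ := (q.1 - p.1) * (r.2 - p.2) - (q.2 - p.2) * (r.1 - p.1)

lemma orient_self (p q : Pt) : orient p q q = 0 := by
  unfold orient
  ring

lemma orient_swap (p q r : Pt) : orient p r q = -orient p q r := by
  unfold orient
  ring

lemma orient_rotate (p q r : Pt) : orient q r p = orient p q r := by
  unfold orient
  ring

lemma ne_of_orient_pos {p q r : Pt} (h : 0 < orient p q r) : q ≠ r := by
  rintro rfl
  exact h.ne' (orient_self p q)

lemma orient_add_orient (p q r s : Pt) :
    orient p q r + orient p r s = orient p q s + orient q r s := by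
  unfold orient
  ring

lemma collinear_of_orient_eq_zero {p q r : Pt} (h : orient p q r = 0) :
    Collinear ℝ ({p, q, r} : Set Pt) := by
  rcases eq_or_ne p q with rfl | hpq
  · simpa using collinear_pair ℝ p r
  have hdist : (q.1 - p.1) ^ 2 + (q.2 - p.2) ^ 2 ≠ 0 := fun h0 => hpq <|
    Prod.ext (by nlinarith [sq_nonneg (q.1 - p.1), sq_nonneg (q.2 - p.2)])
      (by nlinarith [sq_nonneg (q.1 - p.1), sq_nonneg (q.2 - p.2)])
  rw [collinear_iff_of_mem (p₀ := p) (by simp)]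
  refine ⟨q - p, ?_⟩
  rintro x (rfl | rfl | rfl)
  · exact ⟨0, by simp⟩
  · exact ⟨1, by simp⟩
  · refine ⟨((x.1 - p.1) * (q.1 - p.1) + (x.2 - p.2) * (q.2 - p.2)) /
      ((q.1 - p.1) ^ 2 + (q.2 - p.2) ^ 2), ?_⟩
    unfold orient at h
    ext
    · simp only [vadd_eq_add, Prod.fst_add, Prod.smul_fst, Prod.fst_sub, smul_eq_mul]
      field_simp
      linear_combination (-(q.2 - p.2)) * h
    · simp only [vadd_eq_add, Prod.snd_add, Prod.smul_snd, Prod.snd_sub, smul_eq_mul]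
      field_simp
      linear_combination (q.1 - p.1) * h

lemma orient_mul_add_eq_zero (φ : Pt →ₗ[ℝ] ℝ) (o p q r : Pt) :
    orient o q r * φ (p - o) + orient o r p * φ (q - o) + orient o p q * φ (r - o) = 0 := by
  -- Cramer's rule for three vectors of the plane
  have vec : orient o q r • (p - o) + orient o r p • (q - o) + orient o p q • (r - o) = 0 := by
    ext <;>
    · simp only [Prod.fst_add, Prod.snd_add, Prod.smul_fst, Prod.smul_snd, Prod.fst_sub,
        Prod.snd_sub, Prod.fst_zero, Prod.snd_zero, smul_eq_mul]
      unfold orient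
      ring
  simpa only [map_add, map_smul, smul_eq_mul, map_zero] using congrArg φ vec

lemma orient_pos_trans (φ : Pt →ₗ[ℝ] ℝ) {o p q r : Pt} (hp : 0 < φ (p - o))
    (hq : 0 < φ (q - o)) (hr : 0 < φ (r - o)) (hpq : 0 < orient o p q)
    (hqr : 0 < orient o q r) : 0 < orient o p r := by
  have relation := orient_mul_add_eq_zero φ o p q r
  rw [orient_swap o p r] at relation
  refine pos_of_mul_pos_left (b := φ (q - o)) ?_ hq.le
  linarith [mul_pos hqr hp, mul_pos hpq hr]

lemma openSegment_inter_openSegment_nonempty {a b c d : Pt} (habc : 0 < orient a b c)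
    (hacd : 0 < orient a c d) (habd : 0 < orient a b d) (hbcd : 0 < orient b c d) :
    (openSegment ℝ a c ∩ openSegment ℝ b d).Nonempty := by
  have hsum := orient_add_orient a b c d
  have : 0 < orient a b d + orient b c d := by positivity
  refine ⟨(orient b c d / (orient a b d + orient b c d)) • a +
    (orient a b d / (orient a b d + orient b c d)) • c, ⟨_, _, by positivity, by positivity,
      by field_simp; ring, rfl⟩, ⟨orient a c d / (orient a b d + orient b c d),
      orient a b c / (orient a b d + orient b c d), by positivity, by positivity, ?_, ?_⟩⟩
  · field_simp
    linarith
  · ext <;>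
    · simp only [Prod.fst_add, Prod.smul_fst, Prod.snd_add, Prod.smul_snd, smul_eq_mul]
      field_simp
      unfold orient
      ring

lemma exists_equiv_fin_forall_lt {α : Type*} [Fintype α] (r : α → α → Prop)
    [IsStrictTotalOrder α r] :
    ∃ e : Fin (Fintype.card α) ≃ α, ∀ i j, i < j → r (e i) (e j) := by
  classical
  let _ : LinearOrder α := linearOrderOfSTO r
  let e := Fintype.orderIsoFinOfCardEq α rfl
  exact ⟨e.toEquiv, fun i j hij => e.strictMono hij⟩

namespace ConvexPos

variable {P Q : Finset Pt}

lemma mono (hP : ConvexPos P) (hQ : Q ⊆ P) : ConvexPos Q :=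
  ⟨fun p hp q hq r hr => hP.1 p (hQ hp) q (hQ hq) r (hQ hr), fun p hp hmem =>
    hP.2 p (hQ hp) <| convexHull_mono (coe_subset.mpr <| erase_subset_erase p hQ) hmem⟩

lemma exists_linearMap_sub_pos (hP : ConvexPos P) {o : Pt} (ho : o ∈ P) :
    ∃ φ : Pt →ₗ[ℝ] ℝ, ∀ p ∈ P.erase o, 0 < φ (p - o) := by
  obtain ⟨φ, u, hou, hu⟩ := geometric_hahn_banach_point_closed (convex_convexHull ℝ _)
    ((P.erase o).finite_toSet.isClosed_convexHull ℝ) (hP.2 o ho)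
  refine ⟨φ, fun p hp => ?_⟩
  have hup : u < φ p := hu p <| subset_convexHull ℝ _ hp
  rw [map_sub, sub_pos]
  exact hou.trans hup

lemma orient_ne_zero (hP : ConvexPos P) {p q r : Pt} (hp : p ∈ P) (hq : q ∈ P) (hr : r ∈ P)
    (hpq : p ≠ q) (hpr : p ≠ r) (hqr : q ≠ r) : orient p q r ≠ 0 := fun h =>
  hP.1 p hp q hq r hr hpq hpr hqr (collinear_of_orient_eq_zero h)

lemma orient_trans (hP : ConvexPos P) {o p q r : Pt} (ho : o ∈ P) (hp : p ∈ P) (hq : q ∈ P)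
    (hr : r ∈ P) (hpq : 0 < orient o p q) (hqr : 0 < orient o q r) : 0 < orient o p r := by
  have hop : o ≠ p := ne_of_orient_pos (p := q) <| by rwa [← orient_rotate]
  have hqo : q ≠ o := ne_of_orient_pos (p := p) <| by rwa [orient_rotate]
  have hro : r ≠ o := ne_of_orient_pos (p := q) <| by rwa [orient_rotate]
  obtain ⟨φ, hφ⟩ := hP.exists_linearMap_sub_pos ho
  exact orient_pos_trans φ (hφ p (mem_erase.mpr ⟨hop.symm, hp⟩)) (hφ q (mem_erase.mpr ⟨hqo, hq⟩))
    (hφ r (mem_erase.mpr ⟨hro, hr⟩)) hpq hqr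

lemma isStrictTotalOrder_orient (hP : ConvexPos P) {o : Pt} (ho : o ∈ P) :
    IsStrictTotalOrder (P.erase o) fun p q => 0 < orient o p q where
  irrefl p := (orient_self o p).not_gt
  trans p q r := hP.orient_trans ho (mem_of_mem_erase p.2)
    (mem_of_mem_erase q.2) (mem_of_mem_erase r.2)
  trichotomous p q hpq hqp := by
    obtain ⟨hpo, hp⟩ := mem_erase.mp p.2
    obtain ⟨hqo, hq⟩ := mem_erase.mp q.2
    by_contra hne
    refine hP.orient_ne_zero ho hp hq hpo.symm hqo.symm (Subtype.coe_injective.ne hne) ?_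
    have := orient_swap o p q
    linarith

lemma exists_angular_enumeration (hP : ConvexPos P) {o : Pt} (ho : o ∈ P) :
    ∃ (m : ℕ) (g : Fin m ↪ Pt), Set.range g = P.erase o ∧
      ∀ i j, i < j → 0 < orient o (g i) (g j) := by
  have := hP.isStrictTotalOrder_orient ho
  obtain ⟨e, he⟩ := exists_equiv_fin_forall_lt fun p q : P.erase o => 0 < orient o p q
  refine ⟨_, e.toEmbedding.trans (.subtype _), ?_, he⟩
  rw [Function.Embedding.coe_trans, Set.range_comp, Equiv.coe_toEmbedding, e.range_eq_univ,
    Set.image_univ]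
  exact Subtype.range_coe

/-- Transitivity at the apex `q`, around which the points come in the order `r`, `o`, `p`. -/
lemma orient_pos_of_orient_pos (hP : ConvexPos P) {o p q r : Pt} (ho : o ∈ P) (hp : p ∈ P)
    (hq : q ∈ P) (hr : r ∈ P) (hopq : 0 < orient o p q) (hoqr : 0 < orient o q r) :
    0 < orient p q r := by
  rw [← orient_rotate] at hoqr ⊢
  rw [← orient_rotate, ← orient_rotate] at hopq
  exact hP.orient_trans hq hr ho hp hoqr hopq

end ConvexPos

/-- All triples of points of the family `f`, taken in increasing order of their indices, are
counterclockwise: `f` enumerates the vertices of a convex polygon in counterclockwise order. -/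
def IsCounterclockwise {ι : Type*} [LT ι] (f : ι → Pt) : Prop :=
  ∀ ⦃i j l⦄, i < j → j < l → 0 < orient (f i) (f j) (f l)

lemma ConvexPos.exists_isCounterclockwise {P : Finset Pt} (hP : ConvexPos P)
    (hne : P.Nonempty) :
    ∃ (n : ℕ) (f : Fin (n + 1) ↪ Pt), Set.range f = P ∧ IsCounterclockwise f := by
  obtain ⟨o, ho⟩ := hne
  obtain ⟨m, g, hrange, hangle⟩ := hP.exists_angular_enumeration ho
  have hmem : ∀ i, g i ∈ P := fun i => mem_of_mem_erase (hrange.le (Set.mem_range_self i))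
  refine ⟨m, ⟨Fin.cons o g, Fin.cons_injective_iff.mpr ⟨?_, g.injective⟩⟩, ?_, ?_⟩
  · simp [hrange]
  · simp [Fin.range_cons, hrange, ho]
  · intro i j l hij hjl
    obtain ⟨j, rfl⟩ := Fin.exists_succ_eq.mpr hij.ne_bot
    obtain ⟨l, rfl⟩ := Fin.exists_succ_eq.mpr hjl.ne_bot
    have hjl' := hangle j l (Fin.succ_lt_succ_iff.mp hjl)
    refine Fin.cases ?_ (fun i hij => ?_) i hij
    · simpa using hjl'
    exact hP.orient_pos_of_orient_pos ho (hmem i) (hmem j) (hmem l)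
      (hangle i j (Fin.succ_lt_succ_iff.mp hij)) hjl'

/-! ### Convex `k`-plane graphs -/

section KEdges

variable {P : Finset Pt} {E E' : Set (Sym2 Pt)} {k : ℕ}

lemma mk_mem_kEdges {p q : Pt} : s(p, q) ∈ KEdges P ↔ p ∈ P ∧ q ∈ P ∧ p ≠ q := by
  constructor
  · rintro ⟨p', hp, q', hq, hne, heq⟩
    rcases Sym2.eq_iff.mp heq with ⟨rfl, rfl⟩ | ⟨rfl, rfl⟩
    · exact ⟨hp, hq, hne⟩
    · exact ⟨hq, hp, hne.symm⟩
  · rintro ⟨hp, hq, hne⟩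
    exact ⟨p, hp, q, hq, hne, rfl⟩

lemma kEdges_subset_sym2 : KEdges P ⊆ P.sym2 := by
  rintro _ ⟨p, hp, q, hq, -, rfl⟩
  exact mk_mem_sym2_iff.mpr ⟨hp, hq⟩

lemma kEdges_inter_sym2_subset (Q : Finset Pt) : KEdges P ∩ Q.sym2 ⊆ KEdges Q := by
  rintro ⟨p, q⟩ ⟨he, hQ⟩
  obtain ⟨hp, hq⟩ := mk_mem_sym2_iff.mp hQ
  exact mk_mem_kEdges.mpr ⟨hp, hq, (mk_mem_kEdges.mp he).2.2⟩

lemma finite_of_subset_kEdges (hE : E ⊆ KEdges P) : E.Finite :=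
  P.sym2.finite_toSet.subset (hE.trans kEdges_subset_sym2)

lemma KPlane.mono (hE : E.Finite) (hkp : KPlane k E) (hE' : E' ⊆ E) : KPlane k E' :=
  fun e he => (Set.ncard_le_ncard (Set.inter_subset_inter_left {f | Cross e f} hE')
    (hE.subset Set.inter_subset_left)).trans (hkp e (hE' he))

end KEdges

lemma Cross.symm {e f : Sym2 Pt} : Cross e f → Cross f e := by
  rintro ⟨hdisj, p, q, r, s, he, hf, hne⟩
  exact ⟨fun x hxf hxe => hdisj x hxe hxf, r, s, p, q, hf, he, Set.inter_comm _ _ ▸ hne⟩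

namespace IsCounterclockwise

variable {ι : Type*} [LinearOrder ι] {f : ι ↪ Pt}

lemma cross (hf : IsCounterclockwise f) {i j k l : ι} (hij : i < j) (hjk : j < k)
    (hkl : k < l) : Cross s(f i, f k) s(f j, f l) := by
  refine ⟨?_, _, _, _, _, rfl, rfl, openSegment_inter_openSegment_nonempty (hf hij hjk)
    (hf (hij.trans hjk) hkl) (hf hij (hjk.trans hkl)) (hf hjk hkl)⟩
  simp only [Sym2.mem_iff]
  rintro x (rfl | rfl) <;> simp only [f.injective.eq_iff] <;> grind

lemma cross_of_mem_Ioo [LocallyFiniteOrder ι] (hf : IsCounterclockwise f) {a b c d : ι}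
    (hc : c ∈ Ioo a b) (hd : d ∉ Icc a b) : Cross s(f a, f b) s(f c, f d) := by
  obtain ⟨hac, hcb⟩ := mem_Ioo.mp hc
  rcases lt_or_ge d a with hda | had
  · rw [Sym2.eq_swap (a := f c)]
    exact (hf.cross hda hac hcb).symm
  · exact hf.cross hac hcb <| lt_of_not_ge fun hdb => hd (mem_Icc.mpr ⟨had, hdb⟩)

end IsCounterclockwise

/-- The graph on the indices of an enumerated point set whose edges are the pairs `i ≠ j` such
that the segment from `f i` to `f j` belongs to `E`. -/
def indexGraph {ι : Type*} (f : ι → Pt) (E : Set (Sym2 Pt)) : SimpleGraph ι :=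
  (SimpleGraph.fromEdgeSet E).comap f

section IndexGraph

variable {ι : Type*} {f : ι ↪ Pt} {E : Set (Sym2 Pt)}

lemma indexGraph_adj {i j : ι} : (indexGraph f E).Adj i j ↔ s(f i, f j) ∈ E ∧ f i ≠ f j :=
  SimpleGraph.fromEdgeSet_adj E

lemma ncard_incident_le_degree [Fintype ι] [DecidableRel (indexGraph f E).Adj] {P : Finset Pt}
    (hE : E ⊆ KEdges P) (hrange : Set.range f = P) (i : ι) :
    {e | e ∈ E ∧ f i ∈ e}.ncard ≤ (indexGraph f E).degree i := by
  rw [← SimpleGraph.card_neighborFinset_eq_degree, ← Set.ncard_coe_finset]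
  refine (Set.ncard_le_ncard ?_ (Set.toFinite _)).trans
    (Set.ncard_image_le (f := fun j => s(f i, f j)) (Set.toFinite _))
  rintro e ⟨he, hmem⟩
  obtain ⟨y, rfl⟩ := hmem
  obtain ⟨-, hy, hne⟩ := mk_mem_kEdges.mp (hE he)
  obtain ⟨j, rfl⟩ := hrange.ge hy
  exact ⟨j, by simpa [indexGraph_adj] using ⟨he, f.injective.ne_iff.mp hne⟩, rfl⟩

lemma IsCounterclockwise.card_interedges_le_ncard_cross [LinearOrder ι] [LocallyFiniteOrder ι]
    [Fintype ι] [DecidableRel (indexGraph f E).Adj] (hf : IsCounterclockwise f) (hE : E.Finite)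
    (a b : ι) : #((indexGraph f E).interedges (Ioo a b) (Icc a b)ᶜ) ≤
      {e | e ∈ E ∧ Cross s(f a, f b) e}.ncard := by
  rw [← Set.ncard_coe_finset]
  refine Set.ncard_le_ncard_of_injOn (fun x => s(f x.1, f x.2)) ?_ ?_ (hE.subset fun e he => he.1)
  · rintro ⟨c, d⟩ hcd
    obtain ⟨hc, hd, hadj⟩ := Rel.mem_interedges_iff.mp hcd
    exact ⟨(indexGraph_adj.mp hadj).1, hf.cross_of_mem_Ioo hc (mem_compl.mp hd)⟩
  · rintro ⟨c, d⟩ hcd ⟨c', d'⟩ hcd' heq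
    obtain ⟨hc, -, -⟩ := Rel.mem_interedges_iff.mp hcd
    obtain ⟨-, hd', -⟩ := Rel.mem_interedges_iff.mp hcd'
    have hne : c ≠ d' := fun h =>
      mem_compl.mp hd' <| Ioo_subset_Icc_self (a := a) (b := b) (h ▸ hc)
    rcases Sym2.eq_iff.mp heq with ⟨hcc', hdd'⟩ | ⟨hcd', -⟩
    · exact Prod.ext (f.injective hcc') (f.injective hdd')
    · exact absurd (f.injective hcd') hne

end IndexGraph

lemma KPlane.exists_ncard_incident_le {P : Finset Pt} {E : Set (Sym2 Pt)} {k D : ℕ}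
    (hkp : KPlane k E) (hP : ConvexPos P) (hne : P.Nonempty) (hE : E ⊆ KEdges P)
    (hD : k < D ^ 2 / 4) : ∃ v ∈ P, {e | e ∈ E ∧ v ∈ e}.ncard ≤ D := by
  classical
  obtain ⟨n, f, hrange, hf⟩ := hP.exists_isCounterclockwise hne
  by_contra! hdeg
  obtain ⟨a, b, hab, hcross⟩ := exists_adj_sq_div_four_le_card_interedges
    (G := indexGraph f E) fun i => (hdeg (f i) (hrange.le (Set.mem_range_self i))).trans_le <|
      ncard_incident_le_degree hE hrange i
  have few := hkp _ (indexGraph_adj.mp hab).1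
  have many := hf.card_interedges_le_ncard_cross (finite_of_subset_kEdges hE) a b
  omega

lemma KPlane.ncard_le_mul_card {P : Finset Pt} {E : Set (Sym2 Pt)} {k D : ℕ}
    (hkp : KPlane k E) (hP : ConvexPos P) (hE : E ⊆ KEdges P) (hD : k < D ^ 2 / 4) :
    E.ncard ≤ D * #P := by
  rw [← Set.inter_eq_left.mpr (hE.trans kEdges_subset_sym2)]
  refine ncard_inter_sym2_le_mul_card fun Q hQ hne => ?_
  have hkpQ := hkp.mono (finite_of_subset_kEdges hE) (Set.inter_subset_left (t := Q.sym2))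
  exact hkpQ.exists_ncard_incident_le (hP.mono hQ) hne
    ((Set.inter_subset_inter_left _ hE).trans (kEdges_inter_sym2_subset Q)) hD

lemma lt_natSqrt_add_one_sq_div_four (k : ℕ) : k < (Nat.sqrt (4 * k + 1) + 1) ^ 2 / 4 := by
  have hlt : 4 * k + 1 < (Nat.sqrt (4 * k + 1) + 1) ^ 2 := Nat.lt_succ_sqrt' _
  rcases Nat.even_or_odd' (Nat.sqrt (4 * k + 1) + 1) with ⟨m, hm | hm⟩ <;>
  · rw [hm] at hlt ⊢
    ring_nf at hlt ⊢
    omega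

lemma natSqrt_add_one_le_sqrt {k : ℕ} (hk : 5 ≤ k) :
    ((Nat.sqrt (4 * k + 1) + 1 : ℕ) : ℝ) ≤ √(243 * k / 40) := by
  set s := Nat.sqrt (4 * k + 1)
  have hs : s ^ 2 ≤ 4 * k + 1 := Nat.sqrt_le' _
  have hsk : s + 1 ≤ k := by nlinarith
  have hsq : 40 * (s + 1) ^ 2 ≤ 243 * k := by linarith
  refine Real.le_sqrt_of_sq_le ?_
  rw [le_div_iff₀ (by norm_num), mul_comm]
  exact_mod_cast hsq

theorem stmt_6_general (k : ℕ) (P : Finset Pt) (hP : ConvexPos P) (E : Set (Sym2 Pt))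
    (hE : E ⊆ KEdges P) (hkp : KPlane k E) :
    E.ncard ≤ (Nat.sqrt (4 * k + 1) + 1) * #P :=
  hkp.ncard_le_mul_card hP hE (lt_natSqrt_add_one_sq_div_four k)

/-- For `k ≥ 5`, a convex `k`-plane geometric graph on `n` vertices has at most
`√(243·k/40)·n` edges. -/
theorem stmt_6 (k : ℕ) (hk : 5 ≤ k) (n : ℕ)
    (P : Finset Pt) (hP : ConvexPos P) (hcard : P.card = n)
    (E : Set (Sym2 Pt)) (hE : E ⊆ KEdges P) (hkp : KPlane k E) :
    (E.ncard : ℝ) ≤ Real.sqrt (243 * (k : ℝ) / 40) * n := by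
  have hcount : E.ncard ≤ (Nat.sqrt (4 * k + 1) + 1) * n := hcard ▸ stmt_6_general k P hP E hE hkp
  calc (E.ncard : ℝ) ≤ (Nat.sqrt (4 * k + 1) + 1 : ℕ) * n := mod_cast hcount
    _ ≤ Real.sqrt (243 * (k : ℝ) / 40) * n := by gcongr; exact natSqrt_add_one_le_sqrt hk
end

section
/- Let P be a set of 2n points in the plane in general position. Then the edge set of the complete geometric graph K(P) can be partitioned into n classes such that each class forms a spanning tree of K(P) (a connected acyclic graph on all 2n points) and each class, viewed as a geometric graph, is 3-quasi-plane (contains no 3 pairwise crossing edges). -/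
/-!
Label the points by pairs `(j, b)` with `j < n` and `b` a Boolean. The `i`-th class is a double
star with adjacent centers `(i, false)` and `(i, true)`: a point `(j, b)` is joined to `(i, b)` if
`i < j` and to `(i, !b)` if `j < i`. Two pairs `(i, b)` and `(j, c)` with `i < j` are thus adjacent
in class `i` if `b = c` and in class `j` otherwise, so each edge is used exactly once. Every edge of
a double star contains one of the two centers, so among any three of them two share an endpoint and
do not cross.
-/

section Trees

variable {V α : Type*} {G : SimpleGraph V}

theorem connected_of_forall_ne_exists_adj_lt [LT α] [WellFoundedLT α] (height : V → α)
    (r : V) (h : ∀ v ≠ r, ∃ w, G.Adj v w ∧ height w < height v) : G.Connected := by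
  have reachable_root (v : V) : G.Reachable v r := by
    induction v using (InvImage.wf height wellFounded_lt).induction with
    | _ v ih =>
      by_cases hv : v = r
      · rw [hv]
      · obtain ⟨w, hvw, hlt⟩ := h v hv
        exact hvw.reachable.trans (ih w hlt)
  have : Nonempty V := ⟨r⟩
  exact .mk fun u v ↦ (reachable_root u).trans (reachable_root v).symm

theorem isAcyclic_of_subsingleton_adj_le [LinearOrder α] (height : V → α)
    (h : ∀ v, {w | G.Adj v w ∧ height w ≤ height v}.Subsingleton) : G.IsAcyclic := by
  classical
  intro v c hc
  -- A highest vertex of a cycle would have two distinct neighbors that are at most as high.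
  obtain ⟨u, hu, hmax⟩ := Set.exists_max_image {w | w ∈ c.support} height
    (List.finite_toSet _) ⟨v, c.start_mem_support⟩
  have hcycle := hc.rotate hu
  have le_of_mem {w : V} (hw : w ∈ (c.rotate u hu).support) : height w ≤ height u :=
    hmax w ((c.mem_support_rotate_iff u hu).mp hw)
  exact hcycle.snd_ne_penultimate <| h u
    ⟨(c.rotate u hu).adj_snd hcycle.not_nil, le_of_mem (SimpleGraph.Walk.getVert_mem_support _ _)⟩
    ⟨((c.rotate u hu).adj_penultimate hcycle.not_nil).symm,
      le_of_mem (SimpleGraph.Walk.getVert_mem_support _ _)⟩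

end Trees

section DoubleStar

variable {ι : Type*} [LinearOrder ι]

/-- The edge labeling of the complete graph on `ι × Bool` whose `i`-th label class is a double star
with centers `(i, false)` and `(i, true)`. -/
def doubleStarLabeling (ι : Type*) [LinearOrder ι] : SimpleGraph.TopEdgeLabeling (ι × Bool) ι :=
  .mk (fun u v _ ↦ if u.2 = v.2 then min u.1 v.1 else max u.1 v.1) fun u v _ ↦ by
    simp only [eq_comm, min_comm, max_comm]

/-- The spanning double star with centers `(i, false)` and `(i, true)`, as a label class of
`doubleStarLabeling`. -/
def doubleStar (i : ι) : SimpleGraph (ι × Bool) :=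
  (doubleStarLabeling ι).labelGraph i

theorem doubleStar_adj {i : ι} {u v : ι × Bool} :
    (doubleStar i).Adj u v ↔
      u ≠ v ∧ (if u.2 = v.2 then min u.1 v.1 else max u.1 v.1) = i := by
  simp only [doubleStar, doubleStarLabeling, SimpleGraph.TopEdgeLabeling.labelGraph_adj,
    SimpleGraph.EdgeLabeling.get_mk, exists_prop]

theorem iSup_doubleStar : ⨆ i : ι, doubleStar i = ⊤ :=
  (doubleStarLabeling ι).iSup_labelGraph

theorem pairwise_disjoint_doubleStar :
    Pairwise fun i j : ι ↦ Disjoint (doubleStar i) (doubleStar j) :=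
  SimpleGraph.EdgeLabeling.pairwise_disjoint_labelGraph

theorem isVertexCover_doubleStar (i : ι) :
    (doubleStar i).IsVertexCover ({(i, false), (i, true)} : Finset (ι × Bool)) := by
  rintro ⟨j, b⟩ ⟨k, c⟩ h
  rw [doubleStar_adj] at h
  cases b <;> cases c <;> grind

theorem doubleStar_adj_of_lt {i j : ι} (hij : i < j) {b : Bool} {v : ι × Bool} :
    (doubleStar i).Adj (j, b) v ↔ v = (i, b) := by
  rw [doubleStar_adj]
  grind

theorem doubleStar_adj_of_gt {i j : ι} (hji : j < i) {b : Bool} {v : ι × Bool} :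
    (doubleStar i).Adj (j, b) v ↔ v = (i, !b) := by
  rw [doubleStar_adj]
  cases b <;> grind

theorem doubleStar_adj_centers {i : ι} {b c : Bool} :
    (doubleStar i).Adj (i, b) (i, c) ↔ c = !b := by
  rw [doubleStar_adj]
  cases b <;> grind

/-- The height function exhibiting `doubleStar i` as a tree rooted at `(i, false)`: the other center
has height `1` and all remaining vertices have height `2`. -/
def doubleStarHeight (i : ι) (v : ι × Bool) : ℕ :=
  if v.1 = i then v.2.toNat else 2

theorem connected_doubleStar (i : ι) : (doubleStar i).Connected := by
  refine connected_of_forall_ne_exists_adj_lt (doubleStarHeight i) (i, false) ?_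
  rintro ⟨j, b⟩ hroot
  rcases lt_trichotomy i j with hij | rfl | hji
  · refine ⟨(i, b), (doubleStar_adj_of_lt hij).mpr rfl, ?_⟩
    simpa [doubleStarHeight, hij.ne'] using b.toNat_lt
  · obtain rfl : b = true := by simpa using hroot
    exact ⟨(i, false), doubleStar_adj_centers.mpr rfl, by simp [doubleStarHeight]⟩
  · refine ⟨(i, !b), (doubleStar_adj_of_gt hji).mpr rfl, ?_⟩
    simpa [doubleStarHeight, hji.ne] using (!b).toNat_lt

theorem isAcyclic_doubleStar (i : ι) : (doubleStar i).IsAcyclic := by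
  refine isAcyclic_of_subsingleton_adj_le (doubleStarHeight i) ?_
  rintro ⟨j, b⟩
  rcases lt_trichotomy i j with hij | rfl | hji
  · exact Set.subsingleton_singleton.anti fun v hv ↦ (doubleStar_adj_of_lt hij).mp hv.1
  · refine (Set.subsingleton_singleton (a := (i, !b))).anti ?_
    rintro ⟨k, c⟩ ⟨hadj, hle⟩
    obtain rfl : k = i := by
      by_contra hk
      have : 2 ≤ b.toNat := by simpa [doubleStarHeight, hk] using hle
      exact this.not_gt b.toNat_lt
    exact congrArg (Prod.mk k) (doubleStar_adj_centers.mp hadj)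
  · exact Set.subsingleton_singleton.anti fun v hv ↦ (doubleStar_adj_of_gt hji).mp hv.1

theorem isTree_doubleStar (i : ι) : (doubleStar i).IsTree :=
  ⟨connected_doubleStar i, isAcyclic_doubleStar i⟩

end DoubleStar

section GeometricGraph

theorem kQuasiPlane_of_forall_exists_mem {k : ℕ} {E : Set (Sym2 Pt)} {C : Finset Pt}
    (hk : C.card < k) (hC : ∀ e ∈ E, ∃ c ∈ C, c ∈ e) : KQuasiPlane k E := by
  rintro ⟨S, hSE, hcard, hcross⟩
  choose! c hcC hce using fun e he ↦ hC e (hSE he)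
  obtain ⟨e, he, f, hf, hne, hcef⟩ :=
    Finset.exists_ne_map_eq_of_card_lt_of_maps_to (hcard ▸ hk) hcC
  exact (hcross he hf hne).1 (c e) (hce e he) (hcef ▸ hce f hf)

variable {V : Type*} {P : Finset Pt} {f : V → Pt} {G H : SimpleGraph V}

/-- The edge set of the geometric graph obtained by drawing `G` with each vertex `v` placed at the
point `f v`. -/
def drawnEdges (f : V → Pt) (G : SimpleGraph V) : Set (Sym2 Pt) :=
  Sym2.map f '' G.edgeSet

theorem mk_mem_drawnEdges (hf : f.Injective) {u v : V} :
    s(f u, f v) ∈ drawnEdges f G ↔ G.Adj u v :=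
  (Sym2.map.injective hf).mem_set_image (a := s(u, v))

theorem drawnEdges_mono (h : G ≤ H) : drawnEdges f G ⊆ drawnEdges f H :=
  Set.image_mono (SimpleGraph.edgeSet_mono h)

theorem iUnion_drawnEdges {ι : Sort*} (G : ι → SimpleGraph V) :
    ⋃ i, drawnEdges f (G i) = drawnEdges f (⨆ i, G i) := by
  simp only [drawnEdges, SimpleGraph.edgeSet_iSup, Set.image_iUnion]

theorem disjoint_drawnEdges (hf : f.Injective) (h : Disjoint G H) :
    Disjoint (drawnEdges f G) (drawnEdges f H) :=
  (Set.disjoint_image_iff (Sym2.map.injective hf)).mpr (SimpleGraph.disjoint_edgeSet.mpr h)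

theorem drawnEdges_top (hf : f.Injective) (hP : Set.range f = P) :
    drawnEdges f ⊤ = KEdges P := by
  have mem_P (v : V) : f v ∈ P := hP.subset (Set.mem_range_self v)
  ext e
  constructor
  · rintro ⟨⟨u, v⟩, huv, rfl⟩
    exact ⟨f u, mem_P u, f v, mem_P v, hf.ne huv, rfl⟩
  · rintro ⟨p, hp, q, hq, hpq, rfl⟩
    obtain ⟨u, rfl⟩ := hP.superset hp
    obtain ⟨v, rfl⟩ := hP.superset hq
    exact (mk_mem_drawnEdges hf).mpr (ne_of_apply_ne f hpq)

theorem isSpanningTreeOn_drawnEdges (hf : f.Injective) (hP : Set.range f = P) (hG : G.IsTree) :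
    IsSpanningTreeOn P (drawnEdges f G) := by
  refine ⟨(drawnEdges_mono le_top).trans (drawnEdges_top hf hP).subset, ?_⟩
  let φ (v : V) : {x // x ∈ P} := ⟨f v, hP.subset (Set.mem_range_self v)⟩
  have hφ : φ.Bijective := by
    refine ⟨fun u v huv ↦ hf (congrArg Subtype.val huv), fun ⟨p, hp⟩ ↦ ?_⟩
    obtain ⟨v, rfl⟩ := hP.superset hp
    exact ⟨v, rfl⟩
  let drawing : G ≃g SimpleGraph.fromRel
      (fun a b : {x // x ∈ P} ↦ s((a : Pt), (b : Pt)) ∈ drawnEdges f G) :=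
    { toEquiv := Equiv.ofBijective φ hφ
      map_rel_iff' := by
        intro u v
        simpa [φ, mk_mem_drawnEdges hf, G.adj_comm, hf.eq_iff] using fun h : G.Adj u v ↦ h.ne }
  exact drawing.isTree_iff.mp hG

theorem kQuasiPlane_drawnEdges {k : ℕ} {C : Finset V} (hk : C.card < k)
    (hC : G.IsVertexCover C) : KQuasiPlane k (drawnEdges f G) := by
  classical
  refine kQuasiPlane_of_forall_exists_mem (C := C.image f) (Finset.card_image_le.trans_lt hk) ?_
  rintro _ ⟨⟨u, v⟩, huv, rfl⟩
  rcases hC huv with hu | hv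
  · exact ⟨f u, Finset.mem_image_of_mem f hu, Sym2.mem_mk_left _ _⟩
  · exact ⟨f v, Finset.mem_image_of_mem f hv, Sym2.mem_mk_right _ _⟩

end GeometricGraph

theorem stmt_9_general (n : ℕ) (P : Finset Pt) (hcard : P.card = 2 * n) :
    ∃ F : Fin n → Set (Sym2 Pt),
      (⋃ i, F i) = KEdges P ∧
      (Pairwise fun i j => Disjoint (F i) (F j)) ∧
      (∀ i, IsSpanningTreeOn P (F i)) ∧
      (∀ i, KQuasiPlane 3 (F i)) := by
  let φ : Fin n × Bool ≃ P := Fintype.equivOfCardEq (by simp [hcard, mul_comm])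
  let f (v : Fin n × Bool) : Pt := φ v
  have hf : f.Injective := Subtype.val_injective.comp φ.injective
  have hP : Set.range f = P := (φ.surjective.range_comp Subtype.val).trans Subtype.range_coe
  refine ⟨fun i ↦ drawnEdges f (doubleStar i), ?_, fun i j hij ↦ ?_, fun i ↦ ?_, fun i ↦ ?_⟩
  · rw [iUnion_drawnEdges, iSup_doubleStar, drawnEdges_top hf hP]
  · exact disjoint_drawnEdges hf (pairwise_disjoint_doubleStar hij)
  · exact isSpanningTreeOn_drawnEdges hf hP (isTree_doubleStar i)
  · exact kQuasiPlane_drawnEdges (by simp) (isVertexCover_doubleStar i)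

/-- For `2n` points in general position, `K(P)` can be partitioned into `n`
classes, each a 3-quasi-plane spanning tree. -/
theorem stmt_9 (n : ℕ) (P : Finset Pt) (hP : GenPos P) (hcard : P.card = 2 * n) :
    ∃ F : Fin n → Set (Sym2 Pt),
      (⋃ i, F i) = KEdges P ∧
      (Pairwise fun i j => Disjoint (F i) (F j)) ∧
      (∀ i, IsSpanningTreeOn P (F i)) ∧
      (∀ i, KQuasiPlane 3 (F i)) :=
  stmt_9_general n P hcard
end
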